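/- Let (T, ⊗, 1) be a tensor triangulated category having only a set of radical thick tensor ideals, and let Zar(T) denote the frame of radical thick tensor ideals of T. Then the assignment a ↦ √a is a support on T with values in Zar(T), and it is initial among supports: for every support d : obj(T) → F with values in a frame F, there is a unique frame homomorphism u : Zar(T) → F such that u(√a) = d(a) for all objects a of T. -/

import Mathlib

open CategoryTheory CategoryTheory.Limits CategoryTheory.Pretriangulated
open CategoryTheory.MonoidalCategory ZeroObject

universe w w2 v u

section TT

variable {T : Type u} [Category.{v} T] [Preadditive T] [HasZeroObject T]
  [HasShift T ℤ] [∀ n : ℤ, (shiftFunctor T n).Additive] [Pretriangulated T]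
  [MonoidalCategory T] [SymmetricCategory T]
  [∀ X : T, (tensorLeft X).CommShift ℤ]
  [∀ X : T, (tensorLeft X).IsTriangulated]

/-- `tpow a n` is the `n`-fold tensor power `a ⊗ ⋯ ⊗ a` (with `tpow a 0 = 𝟙_ T`). -/
def tpow (a : T) : ℕ → T
  | 0 => 𝟙_ T
  | n + 1 => tpow a n ⊗ a

/-- A thick tensor ideal of a tensor triangulated category, encoded as a set of
objects: a full triangulated subcategory (closed under isomorphisms, zero,
shifts and cones of distinguished triangles), closed under finite sums and
direct summands (retracts), and absorbing for the tensor product. -/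
structure IsThickTensorIdeal (S : Set T) : Prop where
  zero_mem : (0 : T) ∈ S
  mem_of_iso : ∀ {x y : T}, (x ≅ y) → x ∈ S → y ∈ S
  shift_mem : ∀ (n : ℤ) {x : T}, x ∈ S → x⟦n⟧ ∈ S
  cone_mem : ∀ (Tr : Triangle T), Tr ∈ distinguishedTriangles →
    Tr.obj₁ ∈ S → Tr.obj₂ ∈ S → Tr.obj₃ ∈ S
  sum_mem : ∀ {x y : T} (c : BinaryCofan x y), IsColimit c → x ∈ S → y ∈ S → c.pt ∈ S
  summand_mem : ∀ {x y : T} (i : x ⟶ y) (r : y ⟶ x), i ≫ r = 𝟙 x → y ∈ S → x ∈ S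
  tensor_mem : ∀ {a : T}, a ∈ S → ∀ b : T, a ⊗ b ∈ S

/-- The smallest thick tensor ideal containing a set `S` of objects. -/
def ttIdealGen (S : Set T) : Set T :=
  ⋂₀ {I : Set T | IsThickTensorIdeal I ∧ S ⊆ I}

/-- The radical `√S` of the thick tensor ideal generated by `S`: the objects
some positive tensor power of which lies in the thick tensor ideal generated
by `S`. -/
def ttRad (S : Set T) : Set T :=
  {a : T | ∃ n : ℕ, 1 ≤ n ∧ tpow a n ∈ ttIdealGen S}

/-- A radical thick tensor ideal. -/
def IsRadicalTTIdeal (S : Set T) : Prop :=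
  IsThickTensorIdeal S ∧ ∀ (a : T) (n : ℕ), 1 ≤ n → tpow a n ∈ S → a ∈ S
/-- A support on a tensor triangulated category `T` with values in a frame `F`:
a map `d` on objects with `d(0) = ⊥`, `d(𝟙) = ⊤`, `d(Σa) = d(a)`,
`d(a ⊕ b) = d(a) ∨ d(b)` (phrased via colimit binary cofans),
`d(a ⊗ b) = d(a) ∧ d(b)`, and `d(b) ≤ d(a) ∨ d(c)` for every distinguished
triangle `a → b → c → Σa`. -/
structure IsSupport {F : Type w2} [Order.Frame F] (d : T → F) : Prop where
  map_zero : ∀ x : T, IsZero x → d x = ⊥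
  map_unit : d (𝟙_ T) = ⊤
  map_shift : ∀ x : T, d (x⟦(1 : ℤ)⟧) = d x
  map_sum : ∀ {x y : T} (c : BinaryCofan x y), IsColimit c → d c.pt = d x ⊔ d y
  map_tensor : ∀ x y : T, d (x ⊗ y) = d x ⊓ d y
  map_triangle : ∀ Tr : Triangle T, Tr ∈ distinguishedTriangles →
    d Tr.obj₂ ≤ d Tr.obj₁ ⊔ d Tr.obj₃

/-! The radical `√S` is again a thick tensor ideal because of a binomial argument: if `c` lies in
the ideal generated by `a` and `b`, then every ideal containing `aⁿ` and `bᵐ` contains `cⁿ⁺ᵐ`, as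
one sees by induction on `n + m`, passing to the colon ideals `(I : a)` and `(I : b)`. Conversely,
for a support `d` and an element `t` of the frame, the objects with `d a ≤ t` form a radical thick
tensor ideal. Hence `d` has the same join over `√S` as over `S`, so that `I ↦ ⨆ a ∈ I, d a`
extends `d` and preserves joins; it is the only such map since `I` is the join of the `√a`
with `a ∈ I`. -/

section TensorPowers

variable {C : Type*} [Category* C] [MonoidalCategory C]

/-- The isomorphism `aⁿ⁺ᵐ ≅ aⁿ ⊗ aᵐ` of tensor powers. -/
def tpowAddIso (a : C) (n : ℕ) : ∀ m : ℕ, tpow a (n + m) ≅ tpow a n ⊗ tpow a m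
  | 0 => (ρ_ _).symm
  | m + 1 => whiskerRightIso (tpowAddIso a n m) a ≪≫ α_ _ _ _

/-- The isomorphism `(aⁿ)ᵐ ≅ a^(n * m)`. -/
def tpowTpowIso (a : C) (n : ℕ) : ∀ m : ℕ, tpow (tpow a n) m ≅ tpow a (n * m)
  | 0 => Iso.refl _
  | m + 1 => whiskerRightIso (tpowTpowIso a n m) (tpow a n) ≪≫ (tpowAddIso a (n * m) n).symm

end TensorPowers

section Pretriangulated

variable {C : Type*} [Category* C] [Preadditive C] [HasZeroObject C]
  [HasShift C ℤ] [∀ n : ℤ, (shiftFunctor C n).Additive] [Pretriangulated C]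

lemma exists_iso_biprod_of_comp_eq_id {x y : C} (i : x ⟶ y) (r : y ⟶ x) (h : i ≫ r = 𝟙 x) :
    ∃ z : C, Nonempty (y ≅ x ⊞ z) := by
  obtain ⟨z, g, k, hT⟩ := distinguished_cocone_triangle i
  have : Mono i := mono_of_mono_fac h
  obtain ⟨e, -⟩ := exists_iso_binaryBiproduct_of_distTriang _ hT
    (Triangle.mor₃_eq_zero_of_mono₁ _ hT this)
  exact ⟨z, ⟨e⟩⟩

variable [MonoidalCategory C]

section ThickTensorIdeals

variable {S I : Set C}

lemma IsThickTensorIdeal.obj₂_mem (hI : IsThickTensorIdeal I) {Tr : Triangle C}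
    (hTr : Tr ∈ distinguishedTriangles) (h₁ : Tr.obj₁ ∈ I) (h₃ : Tr.obj₃ ∈ I) : Tr.obj₂ ∈ I :=
  hI.cone_mem _ (inv_rot_of_distTriang _ hTr) (hI.shift_mem (-1) h₃) h₁

lemma IsThickTensorIdeal.shift_mem_iff (hI : IsThickTensorIdeal I) (n : ℤ) {x : C} :
    x⟦n⟧ ∈ I ↔ x ∈ I :=
  ⟨fun h => hI.mem_of_iso ((shiftFunctorCompIsoId C n (-n) (by simp)).app x) (hI.shift_mem (-n) h),
    hI.shift_mem n⟩

lemma IsThickTensorIdeal.pt_mem_iff (hI : IsThickTensorIdeal I) {x y : C} {c : BinaryCofan x y}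
    (hc : IsColimit c) : c.pt ∈ I ↔ x ∈ I ∧ y ∈ I :=
  ⟨fun h => ⟨hI.summand_mem c.inl (hc.desc (BinaryCofan.mk (𝟙 x) 0)) (hc.fac _ ⟨.left⟩) h,
    hI.summand_mem c.inr (hc.desc (BinaryCofan.mk 0 (𝟙 y))) (hc.fac _ ⟨.right⟩) h⟩,
    fun h => hI.sum_mem c hc h.1 h.2⟩

lemma IsThickTensorIdeal.mem_of_isZero (hI : IsThickTensorIdeal I) {x : C} (hx : IsZero x) :
    x ∈ I :=
  hI.mem_of_iso ((isZero_zero C).iso hx) hI.zero_mem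

lemma IsThickTensorIdeal.mem_of_unit_mem (hI : IsThickTensorIdeal I) (h : 𝟙_ C ∈ I) (x : C) :
    x ∈ I :=
  hI.mem_of_iso (λ_ x) (hI.tensor_mem h x)

lemma isThickTensorIdeal_ttIdealGen (S : Set C) : IsThickTensorIdeal (ttIdealGen S) where
  zero_mem _ hI := hI.1.zero_mem
  mem_of_iso e hx I hI := hI.1.mem_of_iso e (hx I hI)
  shift_mem n _ hx I hI := hI.1.shift_mem n (hx I hI)
  cone_mem Tr hTr h₁ h₂ I hI := hI.1.cone_mem Tr hTr (h₁ I hI) (h₂ I hI)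
  sum_mem c hc hx hy I hI := hI.1.sum_mem c hc (hx I hI) (hy I hI)
  summand_mem i r h hy I hI := hI.1.summand_mem i r h (hy I hI)
  tensor_mem ha b I hI := hI.1.tensor_mem (ha I hI) b

lemma subset_ttIdealGen (S : Set C) : S ⊆ ttIdealGen S :=
  fun _ hx _ hI => hI.2 hx

lemma ttIdealGen_subset (hI : IsThickTensorIdeal I) (h : S ⊆ I) : ttIdealGen S ⊆ I :=
  fun _ hx => hx I ⟨hI, h⟩

lemma isThickTensorIdeal_of_ttIdealGen_pair_subset (hne : I.Nonempty)
    (h : ∀ a ∈ I, ∀ b ∈ I, ttIdealGen {a, b} ⊆ I) : IsThickTensorIdeal I := by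
  have hgen (a b : C) : IsThickTensorIdeal (ttIdealGen {a, b}) := isThickTensorIdeal_ttIdealGen _
  have left_mem (a b : C) : a ∈ ttIdealGen {a, b} := subset_ttIdealGen _ (by simp)
  have right_mem (a b : C) : b ∈ ttIdealGen {a, b} := subset_ttIdealGen _ (by simp)
  obtain ⟨a₀, ha₀⟩ := hne
  exact {
    zero_mem := h a₀ ha₀ a₀ ha₀ (hgen _ _).zero_mem
    mem_of_iso := fun e hx => h _ hx _ hx ((hgen _ _).mem_of_iso e (left_mem _ _))
    shift_mem := fun n _ hx => h _ hx _ hx ((hgen _ _).shift_mem n (left_mem _ _))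
    cone_mem := fun Tr hTr h₁ h₂ =>
      h _ h₁ _ h₂ ((hgen _ _).cone_mem Tr hTr (left_mem _ _) (right_mem _ _))
    sum_mem := fun c hc hx hy =>
      h _ hx _ hy ((hgen _ _).sum_mem c hc (left_mem _ _) (right_mem _ _))
    summand_mem := fun i r hir hy => h _ hy _ hy ((hgen _ _).summand_mem i r hir (left_mem _ _))
    tensor_mem := fun ha b => h _ ha _ ha ((hgen _ _).tensor_mem (left_mem _ _) b) }

lemma ttIdealGen_subset_ttRad (S : Set C) : ttIdealGen S ⊆ ttRad S :=
  fun a ha => ⟨1, le_rfl, (isThickTensorIdeal_ttIdealGen S).mem_of_iso (λ_ a).symm ha⟩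

lemma subset_ttRad (S : Set C) : S ⊆ ttRad S :=
  (subset_ttIdealGen S).trans (ttIdealGen_subset_ttRad S)

lemma mem_ttRad_singleton (a : C) : a ∈ ttRad {a} :=
  subset_ttRad _ rfl

lemma ttRad_subset_iff (hI : IsRadicalTTIdeal I) : ttRad S ⊆ I ↔ S ⊆ I :=
  ⟨(subset_ttRad S).trans, fun h a ⟨n, hn, ha⟩ => hI.2 a n hn (ttIdealGen_subset hI.1 h ha)⟩

lemma ttRad_singleton_subset_iff (hI : IsRadicalTTIdeal I) {a : C} : ttRad {a} ⊆ I ↔ a ∈ I :=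
  (ttRad_subset_iff hI).trans Set.singleton_subset_iff

lemma IsRadicalTTIdeal.ttRad_sUnion_ttRad_singleton (hI : IsRadicalTTIdeal I) :
    ttRad (⋃₀ ((fun a => ttRad {a}) '' I)) = I := by
  refine Set.Subset.antisymm ((ttRad_subset_iff hI).2 (Set.sUnion_subset ?_)) fun a ha =>
    subset_ttRad _ ⟨_, ⟨a, ha, rfl⟩, mem_ttRad_singleton a⟩
  rintro _ ⟨a, ha, rfl⟩
  exact (ttRad_singleton_subset_iff hI).2 ha

variable [BraidedCategory C]

lemma IsThickTensorIdeal.tensor_mem_comm (hI : IsThickTensorIdeal I) {a b : C} (h : a ⊗ b ∈ I) :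
    b ⊗ a ∈ I :=
  hI.mem_of_iso (β_ a b) h

lemma IsThickTensorIdeal.tensor_mem_right (hI : IsThickTensorIdeal I) (a : C) {b : C}
    (hb : b ∈ I) : a ⊗ b ∈ I :=
  hI.tensor_mem_comm (hI.tensor_mem hb a)

end ThickTensorIdeals

section Supports

variable {F : Type*} [Order.Frame F] {d : C → F}

lemma IsSupport.map_le_of_iso (hd : IsSupport d) {x y : C} (e : x ≅ y) : d y ≤ d x := by
  obtain ⟨z, g, k, hT⟩ := distinguished_cocone_triangle e.hom
  have hz : IsZero z := Triangle.isZero₃_of_isIso₁ _ hT (inferInstanceAs (IsIso e.hom))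
  simpa [hd.map_zero z hz] using hd.map_triangle _ hT

lemma IsSupport.map_iso (hd : IsSupport d) {x y : C} (e : x ≅ y) : d x = d y :=
  le_antisymm (hd.map_le_of_iso e.symm) (hd.map_le_of_iso e)

lemma IsSupport.map_shiftFunctor (hd : IsSupport d) (n : ℤ) (x : C) : d (x⟦n⟧) = d x := by
  have map_shift_add_one (n : ℤ) : d (x⟦n + 1⟧) = d (x⟦n⟧) :=
    (hd.map_iso ((shiftFunctorAdd C n 1).app x)).trans (hd.map_shift _)
  induction n with
  | zero => exact hd.map_iso ((shiftFunctorZero C ℤ).app x)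
  | succ n ih => rw [map_shift_add_one, ih]
  | pred n ih => rw [← ih, ← map_shift_add_one, sub_add_cancel]

lemma IsSupport.map_tpow (hd : IsSupport d) (a : C) {n : ℕ} (hn : 1 ≤ n) :
    d (tpow a n) = d a := by
  induction n, hn using Nat.le_induction with
  | base => simp [tpow, hd.map_tensor, hd.map_unit]
  | succ n _ ih => rw [tpow, hd.map_tensor, ih, inf_idem]

lemma IsSupport.map_le_of_retract (hd : IsSupport d) {x y : C} (i : x ⟶ y) (r : y ⟶ x)
    (h : i ≫ r = 𝟙 x) : d x ≤ d y := by
  obtain ⟨z, ⟨e⟩⟩ := exists_iso_biprod_of_comp_eq_id i r h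
  rw [hd.map_iso e]
  exact le_sup_left.trans (hd.map_sum _ (BinaryBiproduct.isColimit x z)).ge

lemma IsSupport.isRadicalTTIdeal_setOf_le (hd : IsSupport d) (t : F) :
    IsRadicalTTIdeal {x : C | d x ≤ t} where
  left :=
    { zero_mem := (hd.map_zero _ (isZero_zero C)).trans_le bot_le
      mem_of_iso := fun e hx => (hd.map_le_of_iso e).trans hx
      shift_mem := fun n x hx => (hd.map_shiftFunctor n x).trans_le hx
      cone_mem := fun _ hTr h₁ h₂ =>
        (hd.map_triangle _ (rot_of_distTriang _ hTr)).trans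
          (sup_le h₂ ((hd.map_shift _).trans_le h₁))
      sum_mem := fun c hc hx hy => (hd.map_sum c hc).trans_le (sup_le hx hy)
      summand_mem := fun i r h hy => (hd.map_le_of_retract i r h).trans hy
      tensor_mem := fun {a} ha b => (hd.map_tensor a b).trans_le (inf_le_left.trans ha) }
  right a _ hn ha := (hd.map_tpow a hn).ge.trans ha

lemma IsSupport.iSup_ttRad (hd : IsSupport d) (S : Set C) : ⨆ a ∈ ttRad S, d a = ⨆ a ∈ S, d a :=
  le_antisymm
    (iSup₂_le ((ttRad_subset_iff (hd.isRadicalTTIdeal_setOf_le _)).2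
      fun a ha => le_iSup₂_of_le a ha le_rfl))
    (biSup_mono fun _ ha => subset_ttRad S ha)

lemma IsSupport.iSup_ttRad_singleton (hd : IsSupport d) (a : C) : ⨆ b ∈ ttRad {a}, d b = d a := by
  rw [hd.iSup_ttRad, iSup_singleton]

lemma IsSupport.iSup_ttRad_sUnion (hd : IsSupport d) (𝒮 : Set (Set C)) :
    ⨆ a ∈ ttRad (⋃₀ 𝒮), d a = ⨆ I ∈ 𝒮, ⨆ a ∈ I, d a := by
  rw [hd.iSup_ttRad, Set.sUnion_eq_biUnion]
  simp only [iSup_iUnion]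

lemma IsSupport.iSup_univ (hd : IsSupport d) : ⨆ a ∈ (Set.univ : Set C), d a = ⊤ :=
  top_le_iff.1 (hd.map_unit.ge.trans (le_iSup₂_of_le (𝟙_ C) (Set.mem_univ _) le_rfl))

lemma IsSupport.iSup_inter [BraidedCategory C] (hd : IsSupport d) {I J : Set C}
    (hI : IsThickTensorIdeal I) (hJ : IsThickTensorIdeal J) :
    ⨆ a ∈ I ∩ J, d a = (⨆ a ∈ I, d a) ⊓ ⨆ b ∈ J, d b := by
  refine le_antisymm
    (le_inf (biSup_mono fun _ h => h.1) (biSup_mono fun _ h => h.2)) ?_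
  simp only [iSup₂_inf_eq, inf_iSup₂_eq, iSup_le_iff, ← hd.map_tensor]
  exact fun b hb a ha =>
    le_iSup₂_of_le (a ⊗ b) ⟨hI.tensor_mem ha b, hJ.tensor_mem_right a hb⟩ le_rfl

end Supports

variable [∀ X : C, (tensorLeft X).CommShift ℤ] [∀ X : C, (tensorLeft X).IsTriangulated]
  {S S' I : Set C}

/-- The colon ideal `(I : z)` of the objects whose tensor product with `z` lies in `I`, with `z` as
the left factor because it is `tensorLeft z` that is assumed to be exact. -/
def ttColon (I : Set C) (z : C) : Set C :=
  {x : C | z ⊗ x ∈ I}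

lemma isThickTensorIdeal_ttColon (hI : IsThickTensorIdeal I) (z : C) :
    IsThickTensorIdeal (ttColon I z) where
  zero_mem := hI.mem_of_isZero ((tensorLeft z).map_isZero (isZero_zero C))
  mem_of_iso e := hI.mem_of_iso (whiskerLeftIso z e)
  shift_mem n x hx :=
    hI.mem_of_iso (((tensorLeft z).commShiftIso n).app x).symm (hI.shift_mem n hx)
  cone_mem Tr hTr := hI.cone_mem _ ((tensorLeft z).map_distinguished Tr hTr)
  sum_mem c hc := hI.sum_mem _ (mapIsColimitOfPreservesOfIsColimit (tensorLeft z) c.inl c.inr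
    (hc.ofIsoColimit (isoBinaryCofanMk c)))
  summand_mem i r h :=
    hI.summand_mem (z ◁ i) (z ◁ r) (by rw [← whiskerLeft_comp, h, whiskerLeft_id])
  tensor_mem {a} ha b := hI.mem_of_iso (α_ z a b) (hI.tensor_mem ha b)

section Braided

variable [BraidedCategory C]

lemma IsThickTensorIdeal.tensor_mem_of_mem_ttIdealGen (hI : IsThickTensorIdeal I)
    (h : ∀ x ∈ S, ∀ y ∈ S', x ⊗ y ∈ I) {p q : C} (hp : p ∈ ttIdealGen S)
    (hq : q ∈ ttIdealGen S') : p ⊗ q ∈ I := by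
  have hpS' : S' ⊆ ttColon I p := fun y hy =>
    have hyS : S ⊆ ttColon I y := fun x hx => hI.tensor_mem_comm (h x hx y hy)
    hI.tensor_mem_comm (ttIdealGen_subset (isThickTensorIdeal_ttColon hI y) hyS hp)
  exact ttIdealGen_subset (isThickTensorIdeal_ttColon hI p) hpS' hq

lemma IsThickTensorIdeal.tpow_add_mem (hI : IsThickTensorIdeal I) {a b c : C}
    (hc : c ∈ ttIdealGen {a, b}) {n m : ℕ} (ha : tpow a n ∈ I) (hb : tpow b m ∈ I) :
    tpow c (n + m) ∈ I := by
  induction hN : n + m generalizing n m I with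
  | zero =>
    obtain ⟨rfl, rfl⟩ := Nat.add_eq_zero_iff.1 hN
    exact ha
  | succ N ih =>
    rcases n with _ | n
    · exact hI.mem_of_unit_mem ha _
    rcases m with _ | m
    · exact hI.mem_of_unit_mem hb _
    have ha' : a ⊗ tpow c N ∈ I :=
      ih (isThickTensorIdeal_ttColon hI a) (hI.tensor_mem_comm ha)
        (hI.tensor_mem_right a hb) (by lia)
    have hb' : b ⊗ tpow c N ∈ I :=
      ih (isThickTensorIdeal_ttColon hI b) (hI.tensor_mem_right b ha)
        (hI.tensor_mem_comm hb) (by lia)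
    refine ttIdealGen_subset (isThickTensorIdeal_ttColon hI (tpow c N)) ?_ hc
    rintro x (rfl | rfl)
    exacts [hI.tensor_mem_comm ha', hI.tensor_mem_comm hb']

lemma isThickTensorIdeal_ttRad (S : Set C) : IsThickTensorIdeal (ttRad S) := by
  have hS := isThickTensorIdeal_ttIdealGen S
  refine isThickTensorIdeal_of_ttIdealGen_pair_subset
    ⟨0, ttIdealGen_subset_ttRad S hS.zero_mem⟩ ?_
  rintro a ⟨n, hn, ha⟩ b ⟨m, -, hb⟩ c hc
  exact ⟨n + m, Nat.le_add_right_of_le hn, hS.tpow_add_mem hc ha hb⟩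

lemma isRadicalTTIdeal_ttRad (S : Set C) : IsRadicalTTIdeal (ttRad S) :=
  ⟨isThickTensorIdeal_ttRad S, fun a n hn ⟨m, hm, h⟩ =>
    ⟨n * m, Nat.mul_pos hn hm, (isThickTensorIdeal_ttIdealGen S).mem_of_iso (tpowTpowIso a n m) h⟩⟩

lemma ttRad_singleton_eq_iff {a : C} {S : Set C} :
    ttRad {a} = ttRad S ↔ a ∈ ttRad S ∧ S ⊆ ttRad {a} := by
  rw [Set.Subset.antisymm_iff, ttRad_singleton_subset_iff (isRadicalTTIdeal_ttRad S),
    ttRad_subset_iff (isRadicalTTIdeal_ttRad _)]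

lemma ttRad_singleton_of_isZero {x : C} (hx : IsZero x) : ttRad {x} = ttRad {(0 : C)} :=
  ttRad_singleton_eq_iff.2 ⟨(isThickTensorIdeal_ttRad _).mem_of_isZero hx,
    Set.singleton_subset_iff.2 (isThickTensorIdeal_ttRad _).zero_mem⟩

variable (C) in
lemma ttRad_unit : ttRad {𝟙_ C} = Set.univ :=
  Set.eq_univ_of_forall ((isThickTensorIdeal_ttRad _).mem_of_unit_mem (mem_ttRad_singleton _))

lemma ttRad_shift (n : ℤ) (x : C) : ttRad {x⟦n⟧} = ttRad {x} :=
  ttRad_singleton_eq_iff.2 ⟨(isThickTensorIdeal_ttRad _).shift_mem n (mem_ttRad_singleton x),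
    Set.singleton_subset_iff.2
      (((isThickTensorIdeal_ttRad _).shift_mem_iff n).1 (mem_ttRad_singleton _))⟩

lemma ttRad_binaryCofan_pt {x y : C} {c : BinaryCofan x y} (hc : IsColimit c) :
    ttRad {c.pt} = ttRad {x, y} := by
  have pt_mem_iff (S : Set C) : c.pt ∈ ttRad S ↔ {x, y} ⊆ ttRad S := by
    rw [(isThickTensorIdeal_ttRad S).pt_mem_iff hc, Set.pair_subset_iff]
  exact ttRad_singleton_eq_iff.2
    ⟨(pt_mem_iff _).2 (subset_ttRad _), (pt_mem_iff _).1 (mem_ttRad_singleton c.pt)⟩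

lemma ttRad_tensor (x y : C) : ttRad {x ⊗ y} = ttRad {x} ∩ ttRad {y} := by
  refine Set.Subset.antisymm (Set.subset_inter ?_ ?_) ?_
  · exact (ttRad_singleton_subset_iff (isRadicalTTIdeal_ttRad _)).2
      ((isThickTensorIdeal_ttRad _).tensor_mem (mem_ttRad_singleton x) y)
  · exact (ttRad_singleton_subset_iff (isRadicalTTIdeal_ttRad _)).2
      ((isThickTensorIdeal_ttRad _).tensor_mem_right x (mem_ttRad_singleton y))
  · rintro a ⟨⟨n, hn, hx⟩, ⟨m, -, hy⟩⟩
    have hgen := isThickTensorIdeal_ttIdealGen {x ⊗ y}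
    have hxy : tpow a n ⊗ tpow a m ∈ ttIdealGen {x ⊗ y} :=
      hgen.tensor_mem_of_mem_ttIdealGen
        (by rintro _ rfl _ rfl; exact subset_ttIdealGen _ rfl) hx hy
    exact ⟨n + m, Nat.le_add_right_of_le hn, hgen.mem_of_iso (tpowAddIso a n m).symm hxy⟩

lemma ttRad_obj₂_subset {Tr : Triangle C} (hTr : Tr ∈ distinguishedTriangles) :
    ttRad {Tr.obj₂} ⊆ ttRad {Tr.obj₁, Tr.obj₃} :=
  (ttRad_singleton_subset_iff (isRadicalTTIdeal_ttRad _)).2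
    ((isThickTensorIdeal_ttRad _).obj₂_mem hTr
      (subset_ttRad _ (by simp)) (subset_ttRad _ (by simp)))

lemma eq_iSup_of_map_ttRad_sUnion {F : Type*} [CompleteLattice F] {d : C → F} {u : Set C → F}
    (hu : ∀ a, u (ttRad {a}) = d a)
    (hsup : ∀ 𝒮 : Set (Set C), (∀ I ∈ 𝒮, IsRadicalTTIdeal I) →
      u (ttRad (⋃₀ 𝒮)) = ⨆ I ∈ 𝒮, u I)
    (hI : IsRadicalTTIdeal I) : u I = ⨆ a ∈ I, d a := by
  have hsup_I := hsup ((fun a => ttRad {a}) '' I)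
    (Set.forall_mem_image.2 fun _ _ => isRadicalTTIdeal_ttRad _)
  simpa only [hI.ttRad_sUnion_ttRad_singleton, iSup_image, hu] using hsup_I

theorem ttRad_is_initial_support_general :
    ((∀ x : C, IsZero x → ttRad {x} = ttRad {(0 : C)}) ∧
     ttRad {(𝟙_ C)} = Set.univ ∧
     (∀ x : C, ttRad {x⟦(1 : ℤ)⟧} = ttRad {x}) ∧
     (∀ (x y : C) (c : BinaryCofan x y), IsColimit c →
        ttRad {c.pt} = ttRad {x, y}) ∧
     (∀ x y : C, ttRad {x ⊗ y} = ttRad {x} ∩ ttRad {y}) ∧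
     (∀ Tr : Triangle C, Tr ∈ distinguishedTriangles →
        ttRad {Tr.obj₂} ⊆ ttRad {Tr.obj₁, Tr.obj₃})) ∧
    (∀ (F : Type w2) [Order.Frame F] (d : C → F), IsSupport d →
      ∃ u : Set C → F,
        (∀ a : C, u (ttRad {a}) = d a) ∧
        u Set.univ = ⊤ ∧
        (∀ I J : Set C, IsThickTensorIdeal I → IsThickTensorIdeal J →
          u (I ∩ J) = u I ⊓ u J) ∧
        (∀ 𝒮 : Set (Set C), u (ttRad (⋃₀ 𝒮)) = ⨆ I ∈ 𝒮, u I) ∧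
        (∀ u' : Set C → F, (∀ a : C, u' (ttRad {a}) = d a) →
          (∀ 𝒮 : Set (Set C), (∀ I ∈ 𝒮, IsRadicalTTIdeal I) →
            u' (ttRad (⋃₀ 𝒮)) = ⨆ I ∈ 𝒮, u' I) →
          ∀ I : Set C, IsRadicalTTIdeal I → u' I = u I)) :=
  ⟨⟨fun _ => ttRad_singleton_of_isZero, ttRad_unit C, ttRad_shift 1,
      fun _ _ _ => ttRad_binaryCofan_pt, ttRad_tensor, fun _ => ttRad_obj₂_subset⟩,
    fun _ _ d hd => ⟨fun I => ⨆ a ∈ I, d a, hd.iSup_ttRad_singleton, hd.iSup_univ,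
      fun _ _ => hd.iSup_inter, hd.iSup_ttRad_sUnion,
      fun _ hu' hsup _ => eq_iSup_of_map_ttRad_sUnion hu' hsup⟩⟩

end Braided

end Pretriangulated

/-- Theorem: in the Zariski frame of radical thick tensor ideals of `T` (where
the join of a family is the radical of the thick tensor ideal generated by its
union, binary meets are intersections, the bottom element is `√0` and the top
element is all of `T`), the assignment `a ↦ √a` satisfies the axioms of a
support, and it is initial among supports: for every support `d : T → F` with
values in a frame `F` there is a unique frame homomorphism `u` from the Zariski
frame to `F` with `u(√a) = d(a)` for all objects `a`. -/
theorem ttRad_is_initial_support :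
    -- `a ↦ √a` is a support with values in the Zariski frame:
    ((∀ x : T, IsZero x → ttRad {x} = ttRad {(0 : T)}) ∧
     ttRad {(𝟙_ T)} = Set.univ ∧
     (∀ x : T, ttRad {x⟦(1 : ℤ)⟧} = ttRad {x}) ∧
     (∀ (x y : T) (c : BinaryCofan x y), IsColimit c →
        ttRad {c.pt} = ttRad {x, y}) ∧
     (∀ x y : T, ttRad {x ⊗ y} = ttRad {x} ∩ ttRad {y}) ∧
     (∀ Tr : Triangle T, Tr ∈ distinguishedTriangles →
        ttRad {Tr.obj₂} ⊆ ttRad {Tr.obj₁, Tr.obj₃})) ∧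
    -- initiality among supports:
    (∀ (F : Type w2) [Order.Frame F] (d : T → F), IsSupport d →
      ∃ u : Set T → F,
        (∀ a : T, u (ttRad {a}) = d a) ∧
        -- `u` is a frame homomorphism on the radical thick tensor ideals:
        u Set.univ = ⊤ ∧
        (∀ I J : Set T, IsRadicalTTIdeal I → IsRadicalTTIdeal J →
          u (I ∩ J) = u I ⊓ u J) ∧
        (∀ 𝒮 : Set (Set T), (∀ I ∈ 𝒮, IsRadicalTTIdeal I) →
          u (ttRad (⋃₀ 𝒮)) = ⨆ I ∈ 𝒮, u I) ∧
        -- uniqueness: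
        (∀ u' : Set T → F, (∀ a : T, u' (ttRad {a}) = d a) →
          u' Set.univ = ⊤ →
          (∀ I J : Set T, IsRadicalTTIdeal I → IsRadicalTTIdeal J →
            u' (I ∩ J) = u' I ⊓ u' J) →
          (∀ 𝒮 : Set (Set T), (∀ I ∈ 𝒮, IsRadicalTTIdeal I) →
            u' (ttRad (⋃₀ 𝒮)) = ⨆ I ∈ 𝒮, u' I) →
          ∀ I : Set T, IsRadicalTTIdeal I → u' I = u I)) := by
  obtain ⟨isSupport_ttRad, initial⟩ := ttRad_is_initial_support_general (C := T)
  refine ⟨isSupport_ttRad, fun F _ d hd => ?_⟩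
  obtain ⟨u, hu, htop, hinf, hsup, huniq⟩ := initial F d hd
  exact ⟨u, hu, htop, fun I J hI hJ => hinf I J hI.1 hJ.1, fun 𝒮 _ => hsup 𝒮,
    fun u' hu' _ _ => huniq u' hu'⟩

end TT
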